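/- Let q be a prime power, μ ∈ ℚ, and α ∈ ℕ^n with θ(α) = μ·ht(α), α ≠ 0. Then R^{ss}_μ(α, q)/|GL(α, F_q)| = Σ_{α^*} (−1)^{s−1} q^{−Σ_{i<j} ⟨α^j, α^i⟩} ∏_{i=1}^s R(α^i, q)/|GL(α^i, F_q)|, where the sum runs over all tuples α^* = (α^1, …, α^s) of non-zero vectors in ℕ^n with Σ_{i=1}^s α^i = α and μ(α^1 + ⋯ + α^i) > μ(α) for all 1 ≤ i ≤ s−1, where R(β, q) = q^{Σ_{1≤i,j≤n} a_{ij} β_i β_j}, |GL(β, F_q)| = ∏_{i=1}^n ∏_{k=0}^{β_i−1} (q^{β_i} − q^k), and ⟨β, γ⟩ = Σ_{i=1}^n β_i γ_i − Σ_{1≤i,j≤n} a_{ij} β_i γ_j is the Euler form of Γ. -/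

import Mathlib

open Matrix BigOperators
open scoped Classical

/-- A representation over `k` of the quiver `Γ` with vertices `{1,…,n}` and `a i j`
arrows from `i` to `j`, of dimension vector `α`. -/
abbrev QRep (n : ℕ) (a : Fin n → Fin n → ℕ) (k : Type*) [Field k] (α : Fin n → ℕ) :=
  ∀ i j : Fin n, Fin (a i j) → Matrix (Fin (α j)) (Fin (α i)) k

/-- A subrepresentation: a family of subspaces stable under all arrow maps. -/
structure SubRep {n : ℕ} {a : Fin n → Fin n → ℕ} {k : Type*} [Field k]
    {α : Fin n → ℕ} (σ : QRep n a k α) where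
  U : ∀ i, Submodule k (Fin (α i) → k)
  stable : ∀ i j (t : Fin (a i j)), ∀ x ∈ U i, (σ i j t).mulVec x ∈ U j

/-- The slope `μ(β) = θ(β)/ht(β)` of a dimension vector. -/
def qSlope (n : ℕ) (θ : (Fin n → ℤ) →ₗ[ℤ] ℤ) (β : Fin n → ℕ) : ℚ :=
  (θ (fun i => (β i : ℤ)) : ℚ) / ((∑ i, β i : ℕ) : ℚ)

/-- `θ(β) = μ · ht(β)`: the vector `β` has slope `μ` (i.e. `β ∈ Δ_μ`). -/
def qSlopeIs (n : ℕ) (θ : (Fin n → ℤ) →ₗ[ℤ] ℤ) (μ : ℚ) (β : Fin n → ℕ) : Prop :=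
  (θ (fun i => (β i : ℤ)) : ℚ) = μ * ((∑ i, β i : ℕ) : ℚ)

/-- A (non-zero) representation is semistable if every non-zero proper
subrepresentation `U` satisfies `μ(U) ≤ μ(M)`. -/
def IsSemistable {n : ℕ} {a : Fin n → Fin n → ℕ} (θ : (Fin n → ℤ) →ₗ[ℤ] ℤ)
    {k : Type*} [Field k] {α : Fin n → ℕ} (σ : QRep n a k α) : Prop :=
  ∀ W : SubRep σ, (∃ i, W.U i ≠ ⊥) → (∃ i, W.U i ≠ ⊤) →
    qSlope n θ (fun i => Module.finrank k (W.U i)) ≤ qSlope n θ α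

/-- `R^{ss}_μ(α, q)`: the number of semistable representations of `Γ` over `F` of
dimension vector `α` of slope `μ` (with `R^{ss}_μ(0, q) = 1`). -/
noncomputable def Rss (F : Type) [Field F] [Fintype F] (n : ℕ) (a : Fin n → Fin n → ℕ)
    (θ : (Fin n → ℤ) →ₗ[ℤ] ℤ) (μ : ℚ) (α : Fin n → ℕ) : ℕ :=
  Nat.card {σ : QRep n a F α // IsSemistable θ σ ∧ qSlopeIs n θ μ α}

/-- The Euler form `⟨β,γ⟩ = Σ_i β_i γ_i − Σ_{i,j} a_{ij} β_i γ_j` of `Γ`. -/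
def eulerForm (n : ℕ) (a : Fin n → Fin n → ℕ) (β γ : Fin n → ℕ) : ℤ :=
  ∑ i, (β i : ℤ) * (γ i : ℤ) - ∑ i, ∑ j, (a i j : ℤ) * (β i : ℤ) * (γ j : ℤ)

/-- `|GL(β, F_q)| = ∏_i ∏_{k=0}^{β_i − 1} (q^{β_i} − q^k)` as a rational number. -/
def cardGLq (q : ℚ) {n : ℕ} (β : Fin n → ℕ) : ℚ :=
  ∏ i, ∏ k ∈ Finset.range (β i), (q ^ (β i) - q ^ k)

/-- `R(β, q) = q^{Σ_{i,j} a_{ij} β_i β_j}`, the number of representations of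
dimension vector `β`. -/
def Rall (q : ℚ) (n : ℕ) (a : Fin n → Fin n → ℕ) (β : Fin n → ℕ) : ℚ :=
  q ^ (∑ i, ∑ j, a i j * β i * β j)

/-!
Call the quantity `θ(β) - μ ht(β)` the slope defect of `β`, and consider the alternating number
`∑ (-1)^r` of chains `U₁ < ⋯ < U_r < M` of subrepresentations of positive slope defect in a
representation `M` of slope `μ`. If `M` is semistable, only the empty chain occurs and the sum is
`1`. Otherwise let `N` be a subrepresentation of maximal slope defect: by modularity of dimensions,
`U ∩ N` has positive slope defect whenever `U` does, so the poset of these subrepresentations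
contracts onto `N` and the sum vanishes. Hence the number of semistable representations is the sum
of the alternating chain sums of all representations. Splitting off the largest member `U_r` of a
chain, and counting the graded subspaces of a given dimension vector and the representations
stabilising one of them, turns this sum into the recursion satisfied by the right-hand side.
-/

open Finset.HasAntidiagonal (antidiagonal mem_antidiagonal)
open Finset (HasAntidiagonal)

attribute [local instance] Fintype.ofFinite
attribute [local instance] Finset.HasAntidiagonal.antidiagonalOfLocallyFinite

section ChainSum

/-- The alternating number `∑ (-1)^r` of chains `y₁ < ⋯ < y_r < x` of elements satisfying `Q`, for
`r ≥ 0`; the defining recursion splits off the largest member `y_r`. -/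
noncomputable def alternatingChainSum {X : Type*} [Preorder X] [Finite X] (Q : X → Prop)
    (x : X) : ℤ :=
  1 - ∑ y : {y : X // y < x ∧ Q y}, alternatingChainSum Q y
termination_by wellFounded_lt.wrap x
decreasing_by exact y.2.1

theorem alternatingChainSum_eq {X : Type*} [Preorder X] [Fintype X] (Q : X → Prop) (x : X) :
    alternatingChainSum Q x = 1 - ∑ y with y < x ∧ Q y, alternatingChainSum Q y := by
  rw [alternatingChainSum, Finset.sum_subtype _ fun _ => Finset.mem_filter_univ _]

theorem alternatingChainSum_initialSeg {X Y : Type*} [PartialOrder X] [Finite X]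
    [PartialOrder Y] [Finite Y] (e : X ≤i Y) (Q : Y → Prop) (x : X) :
    alternatingChainSum Q (e x) = alternatingChainSum (Q ∘ e) x := by
  induction x using WellFoundedLT.induction with
  | ind x ih =>
    rw [alternatingChainSum_eq, alternatingChainSum_eq]
    congr 1
    symm
    refine Finset.sum_bij (fun z _ => e z) ?_ (fun _ _ _ _ h => e.injective h) ?_ ?_
    · simp
    · intro y hy
      obtain ⟨hyx, hQy⟩ := (Finset.mem_filter_univ y).1 hy
      obtain ⟨z, rfl⟩ := e.mem_range_of_rel hyx
      exact ⟨z, by simpa using And.intro hyx hQy, rfl⟩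
    · intro z hz
      exact (ih z ((Finset.mem_filter_univ z).1 hz).1).symm

theorem alternatingChainSum_eq_one {X : Type*} [Preorder X] [Finite X] {Q : X → Prop} {x : X}
    (h : ∀ y < x, ¬ Q y) : alternatingChainSum Q x = 1 := by
  rw [alternatingChainSum_eq, Finset.filter_false_of_mem fun y _ hy => h y hy.1 hy.2,
    Finset.sum_empty, sub_zero]

theorem sum_le_alternatingChainSum {X : Type*} [PartialOrder X] [Finite X] {Q : X → Prop} {x : X}
    (hx : Q x) : ∑ y with y ≤ x ∧ Q y, alternatingChainSum Q y = 1 := by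
  have hinsert : ({y | y ≤ x ∧ Q y} : Finset X) = insert x ({y | y < x ∧ Q y} : Finset X) := by
    ext y
    simp only [Finset.mem_filter_univ, Finset.mem_insert, le_iff_eq_or_lt]
    grind
  rw [hinsert, Finset.sum_insert (by simp), alternatingChainSum_eq Q x, sub_add_cancel]

theorem alternatingChainSum_eq_zero {X : Type*} [SemilatticeInf X] [Finite X] {Q : X → Prop}
    {m : X} (hm : ∀ y, Q y → Q (y ⊓ m)) {x : X} (hx : Q (x ⊓ m)) (hxm : ¬ x ≤ m) :
    alternatingChainSum Q x = 0 := by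
  induction x using WellFoundedLT.induction with
  | ind x ih =>
    have hsum : ∑ y with y < x ∧ Q y, alternatingChainSum Q y =
        ∑ y with y ≤ x ⊓ m ∧ Q y, alternatingChainSum Q y := by
      symm
      refine Finset.sum_subset (fun y hy => ?_) (fun y hy hy' => ?_)
      · obtain ⟨hle, hQy⟩ := (Finset.mem_filter_univ y).1 hy
        exact (Finset.mem_filter_univ y).2
          ⟨hle.trans_lt (inf_le_left.lt_of_ne (mt inf_eq_left.1 hxm)), hQy⟩
      · obtain ⟨hlt, hQy⟩ := (Finset.mem_filter_univ y).1 hy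
        refine ih y hlt (hm y hQy) fun hle => hy' ?_
        exact (Finset.mem_filter_univ y).2 ⟨le_inf hlt.le hle, hQy⟩
    rw [alternatingChainSum_eq, hsum, sum_le_alternatingChainSum hx, sub_self]

end ChainSum

section Tuples

variable {M : Type*} [AddCommMonoid M]

/-- The tuples of non-zero elements with sum `x`, all of whose proper non-empty initial segments
have a sum in `P`: the index set of Reineke's recursion, for an arbitrary condition `P`. -/
def restrictedCompositions (P : M → Prop) (x : M) : Set (List M) :=
  {L | L ≠ [] ∧ (∀ y ∈ L, y ≠ 0) ∧ L.sum = x ∧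
    ∀ i : ℕ, 1 ≤ i → i + 1 ≤ L.length → P (L.take i).sum}

theorem singleton_mem_restrictedCompositions {P : M → Prop} {x y : M} :
    [y] ∈ restrictedCompositions P x ↔ y ≠ 0 ∧ y = x := by
  simp only [restrictedCompositions, Set.mem_ofPred_eq, List.length_singleton]
  grind

theorem append_singleton_mem_restrictedCompositions {P : M → Prop} {x z : M} {L : List M}
    (hL : L ≠ []) :
    L ++ [z] ∈ restrictedCompositions P x ↔
      ∃ y, (y + z = x ∧ z ≠ 0 ∧ P y) ∧ L ∈ restrictedCompositions P y := by
  have hlen : 1 ≤ L.length := List.length_pos_iff.2 hL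
  simp only [restrictedCompositions, Set.mem_ofPred_eq, List.length_append, List.length_singleton,
    List.sum_append, List.sum_singleton, List.mem_append, List.mem_singleton]
  constructor
  · rintro ⟨-, hne, hsum, hP⟩
    refine ⟨L.sum, ⟨hsum, hne z (Or.inr rfl), ?_⟩, hL, fun y hy => hne y (Or.inl hy), rfl, ?_⟩
    · simpa using hP L.length hlen le_rfl
    · intro i hi hi'
      simpa [List.take_append_of_le_length (Nat.le_of_succ_le hi')] using hP i hi (by omega)
  · rintro ⟨y, ⟨hsum, hz, hPy⟩, -, hne, rfl, hP⟩
    refine ⟨by simp, by grind, hsum, fun i hi hi' => ?_⟩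
    rw [List.take_append_of_le_length (by omega)]
    rcases Nat.lt_or_ge i L.length with h | h
    · exact hP i hi h
    · rwa [List.take_of_length_le h]

theorem restrictedCompositions_eq [DecidableEq M] [HasAntidiagonal M] (P : M → Prop) {x : M}
    (hx : x ≠ 0) :
    restrictedCompositions P x = insert [x]
      (⋃ p ∈ {p ∈ antidiagonal x | p.2 ≠ 0 ∧ P p.1},
        (· ++ [p.2]) '' restrictedCompositions P p.1) := by
  ext L
  rcases List.eq_nil_or_concat' L with rfl | ⟨L, z, rfl⟩
  · simp [restrictedCompositions]
  rcases eq_or_ne L [] with rfl | hL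
  · have hnil : ∀ y, [] ∉ restrictedCompositions P y := fun y h => h.1 rfl
    have hsingle : z ≠ 0 ∧ z = x ↔ z = x := and_iff_right_of_imp fun h => h ▸ hx
    simp only [List.nil_append, singleton_mem_restrictedCompositions, hsingle, Set.mem_insert_iff,
      List.cons.injEq, and_true, iff_self_or, Set.mem_iUnion, Set.mem_image]
    rintro ⟨p, -, L, hL, hLz⟩
    exact absurd (List.append_inj_left' (s₂ := []) hLz rfl ▸ hL) (hnil p.1)
  · simp only [append_singleton_mem_restrictedCompositions hL]
    have hne : L ++ [z] ≠ [x] := fun h => hL (List.append_inj_left' (s₂ := []) h rfl)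
    simp [hne, and_assoc, and_comm, and_left_comm]

section Order

variable [PartialOrder M] [CanonicallyOrderedAdd M] [IsOrderedCancelAddMonoid M]

theorem restrictedCompositions_zero (P : M → Prop) : restrictedCompositions P 0 = ∅ := by
  rw [Set.eq_empty_iff_forall_notMem]
  rintro L ⟨hL, hne, hsum, -⟩
  obtain ⟨y, hy⟩ := List.exists_mem_of_ne_nil L hL
  exact hne y hy (List.sum_eq_zero_iff.1 hsum y hy)

theorem restrictedCompositions_congr {P Q : M → Prop} (h : ∀ y ≠ 0, P y ↔ Q y) (x : M) :
    restrictedCompositions P x = restrictedCompositions Q x := by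
  ext L
  refine and_congr_right fun hL => and_congr_right fun hne => and_congr_right fun _ =>
    forall₃_congr fun i hi _ => h _ fun hsum => ?_
  obtain ⟨y, hy⟩ := List.exists_mem_of_ne_nil (L.take i) (by simp [hL]; omega)
  exact hne y (List.mem_of_mem_take hy) (List.sum_eq_zero_iff.1 hsum y hy)

theorem lt_of_mem_antidiagonal [HasAntidiagonal M] {x : M} {p : M × M} (hp : p ∈ antidiagonal x)
    (hp0 : p.2 ≠ 0) : p.1 < x := by
  rw [← mem_antidiagonal.1 hp]
  exact lt_add_of_pos_right _ (pos_iff_ne_zero.2 hp0)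

variable [HasAntidiagonal M] [WellFoundedLT M]

theorem finite_restrictedCompositions (P : M → Prop) (x : M) :
    (restrictedCompositions P x).Finite := by
  induction x using WellFoundedLT.induction with
  | ind x ih =>
    rcases eq_or_ne x 0 with rfl | hx
    · rw [restrictedCompositions_zero]
      exact Set.finite_empty
    · rw [restrictedCompositions_eq P hx]
      refine (Set.Finite.biUnion (Finset.finite_toSet _) fun p hp => ?_).insert _
      obtain ⟨hp, hp0, -⟩ := Finset.mem_filter.1 hp
      exact (ih p.1 (lt_of_mem_antidiagonal hp hp0)).image _

theorem finsum_restrictedCompositions [DecidableEq M] {R : Type*} [AddCommMonoid R]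
    (P : M → Prop) {x : M} (hx : x ≠ 0) (f : List M → R) :
    ∑ᶠ L ∈ restrictedCompositions P x, f L =
      f [x] + ∑ p ∈ antidiagonal x with p.2 ≠ 0 ∧ P p.1,
        ∑ᶠ L ∈ restrictedCompositions P p.1, f (L ++ [p.2]) := by
  have hfin : ∀ p : M × M, ((· ++ [p.2]) '' restrictedCompositions P p.1).Finite :=
    fun p => (finite_restrictedCompositions P p.1).image _
  have hnotMem : [x] ∉ ⋃ p ∈ {p ∈ antidiagonal x | p.2 ≠ 0 ∧ P p.1},
      (· ++ [p.2]) '' restrictedCompositions P p.1 := by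
    simp only [Set.mem_iUnion, Set.mem_image, not_exists, not_and]
    rintro p - L hL h
    exact hL.1 (List.append_inj_left' (t₂ := [x]) (s₂ := []) h rfl)
  have hdisj : (SetLike.coe {p ∈ antidiagonal x | p.2 ≠ 0 ∧ P p.1}).PairwiseDisjoint
      fun p => (· ++ [p.2]) '' restrictedCompositions P p.1 := by
    intro p _ p' _ hne
    refine Set.disjoint_left.2 ?_
    rintro _ ⟨L, hL, rfl⟩ ⟨L', hL', h⟩
    obtain ⟨rfl, hz⟩ := List.append_inj' h rfl
    exact hne (Prod.ext (hL.2.2.1.symm.trans hL'.2.2.1) (List.singleton_inj.1 hz).symm)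
  have hunion := finsum_mem_biUnion (f := f) hdisj (Finset.finite_toSet _) fun p _ => hfin p
  simp only [SetLike.mem_coe, finsum_mem_finset_eq_sum] at hunion
  rw [restrictedCompositions_eq P hx, finsum_mem_insert _ hnotMem
    (Set.Finite.biUnion (Finset.finite_toSet _) fun p _ => hfin p), hunion]
  simp only [finsum_mem_image (List.append_left_injective _).injOn]

end Order
end Tuples

section SubspaceCount

/-- The order `∏_{k<d} (q^d - q^k)` of `GL_d` over a field with `q` elements, as a function of an
arbitrary ring element `q`; it is the factor of `cardGLq` at a vertex of dimension `d`. -/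
def glCard {R : Type*} [CommRing R] (q : R) (d : ℕ) : R :=
  ∏ k ∈ Finset.range d, (q ^ d - q ^ k)

theorem glCard_add {R : Type*} [CommRing R] (q : R) (k m : ℕ) :
    glCard q (k + m) =
      (∏ i ∈ Finset.range k, (q ^ (k + m) - q ^ i)) * (q ^ (k * m) * glCard q m) := by
  have hfactor (x : ℕ) : q ^ (k + m) - q ^ (k + x) = q ^ k * (q ^ m - q ^ x) := by ring
  simp only [glCard, Finset.prod_range_add, hfactor, Finset.prod_mul_distrib, Finset.prod_const,
    Finset.card_range, pow_mul]

theorem glCard_ne_zero {R : Type*} [CommRing R] [LinearOrder R] [IsStrictOrderedRing R] {q : R}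
    (hq : 1 < q) (d : ℕ) : glCard q d ≠ 0 :=
  Finset.prod_ne_zero_iff.2 fun _ hk =>
    (sub_pos.2 (pow_lt_pow_right₀ hq (Finset.mem_range.1 hk))).ne'

theorem cardGLq_ne_zero {q : ℚ} (hq : 1 < q) {n : ℕ} (β : Fin n → ℕ) : cardGLq q β ≠ 0 :=
  Finset.prod_ne_zero_iff.2 fun i _ => glCard_ne_zero hq (β i)

variable {F V : Type*} [Field F] [AddCommGroup V] [Module F V]

theorem span_range_coe_eq {W : Submodule F V} [FiniteDimensional F W] {k : ℕ} {s : Fin k → W}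
    (hs : LinearIndependent F s) (hk : Module.finrank F W = k) :
    Submodule.span F (Set.range fun i => (s i : V)) = W := by
  rw [Set.range_comp' Subtype.val s, ← W.coe_subtype, ← Submodule.map_span,
    hs.span_eq_top_of_card_eq_finrank' (by simp [hk]), Submodule.map_subtype_top]

/-- The independent `k`-tuples of vectors with span `W`, where `W` is `k`-dimensional, as the
independent `k`-tuples in `W`. -/
def spanFiberEquiv {k : ℕ} {W : Submodule F V} [FiniteDimensional F W]
    (hW : Module.finrank F W = k) :
    {s : {s : Fin k → V // LinearIndependent F s} // Submodule.span F (Set.range s.1) = W} ≃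
      {s : Fin k → W // LinearIndependent F s} where
  toFun s := ⟨fun i => ⟨s.1.1 i, s.2.le (Submodule.subset_span ⟨i, rfl⟩)⟩,
    .of_comp W.subtype s.1.2⟩
  invFun s := ⟨⟨fun i => s.1 i, s.2.map' W.subtype W.ker_subtype⟩, span_range_coe_eq s.2 hW⟩

variable [Fintype F] [Finite V]

theorem natCard_linearIndependent {k m : ℕ} (h : k + m = Module.finrank F V) :
    (Nat.card {s : Fin k → V // LinearIndependent F s} : ℚ) =
      ∏ i ∈ Finset.range k, ((Fintype.card F : ℚ) ^ (k + m) - (Fintype.card F : ℚ) ^ i) := by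
  rw [card_linearIndependent (Nat.le.intro h), Finset.prod_range, Nat.cast_prod, h]
  refine Finset.prod_congr rfl fun i _ => ?_
  rw [Nat.cast_sub (Nat.pow_le_pow_right Fintype.card_pos (by omega))]
  push_cast
  rfl

theorem natCard_linearIndependent_finrank {k : ℕ} (h : Module.finrank F V = k) :
    (Nat.card {s : Fin k → V // LinearIndependent F s} : ℚ) = glCard (Fintype.card F : ℚ) k :=
  natCard_linearIndependent (m := 0) h.symm

theorem card_submodule_finrank_eq {k m : ℕ} (h : k + m = Module.finrank F V) :
    ((Finset.univ.filter fun W : Submodule F V => Module.finrank F W = k).card : ℚ) =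
      glCard (Fintype.card F : ℚ) (k + m) / (glCard (Fintype.card F : ℚ) k *
        ((Fintype.card F : ℚ) ^ (k * m) * glCard (Fintype.card F : ℚ) m)) := by
  have hq : (1 : ℚ) < Fintype.card F := mod_cast Fintype.one_lt_card (α := F)
  have hm : (Fintype.card F : ℚ) ^ (k * m) * glCard (Fintype.card F : ℚ) m ≠ 0 :=
    mul_ne_zero (by positivity) (glCard_ne_zero hq m)
  have hfiber : (Nat.card {s : Fin k → V // LinearIndependent F s} : ℚ) =
      ∑ _W ∈ Finset.univ.filter fun W : Submodule F V => Module.finrank F W = k,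
        glCard (Fintype.card F : ℚ) k := by
    have hmaps : ∀ s ∈ (Finset.univ : Finset {s : Fin k → V // LinearIndependent F s}),
        Submodule.span F (Set.range s.1) ∈
          Finset.univ.filter fun W : Submodule F V => Module.finrank F W = k := fun s _ => by
      rw [Finset.mem_filter_univ, finrank_span_eq_card s.2, Fintype.card_fin]
    rw [Nat.card_eq_fintype_card, ← Finset.card_univ, Finset.card_eq_sum_card_fiberwise hmaps,
      Nat.cast_sum]
    refine Finset.sum_congr rfl fun W hW => ?_
    have hWk := (Finset.mem_filter_univ W).1 hW
    rw [← natCard_linearIndependent_finrank hWk, ← Nat.card_congr (spanFiberEquiv hWk),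
      Nat.card_eq_fintype_card, Fintype.card_subtype]
  rw [glCard_add, ← natCard_linearIndependent h, hfiber, mul_div_mul_right _ _ hm, Finset.sum_const,
    nsmul_eq_mul, mul_div_cancel_right₀ _ (glCard_ne_zero hq k)]

end SubspaceCount

section DimVec

variable (F : Type*) [Field F] {ι : Type*} (V : ι → Type*) [∀ i, AddCommGroup (V i)]
  [∀ i, Module F (V i)]

/-- The dimension vector of a family of vector spaces. -/
noncomputable def dimVec : ι → ℕ := fun i => Module.finrank F (V i)

variable {F V}

theorem dimVec_top : (dimVec F fun i => (⊤ : ∀ i, Submodule F (V i)) i) = dimVec F V :=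
  funext fun i => finrank_top F (V i)

variable [∀ i, FiniteDimensional F (V i)]

theorem dimVec_ne_zero_iff {U : ∀ i, Submodule F (V i)} :
    (dimVec F fun i => U i) ≠ 0 ↔ ∃ i, U i ≠ ⊥ := by
  rw [Function.ne_iff]
  exact exists_congr fun i => Submodule.finrank_eq_zero.not

theorem dimVec_sup_add_dimVec_inf (U W : ∀ i, Submodule F (V i)) :
    (dimVec F fun i => (U ⊔ W) i) + (dimVec F fun i => (U ⊓ W) i) =
      (dimVec F fun i => U i) + dimVec F fun i => W i :=
  funext fun i => Submodule.finrank_sup_add_finrank_inf_eq (U i) (W i)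

theorem dimVec_add_dimVec_quotient (U : ∀ i, Submodule F (V i)) :
    (dimVec F fun i => U i) + (dimVec F fun i => V i ⧸ U i) = dimVec F V :=
  funext fun i => (add_comm _ _).trans (U i).finrank_quotient_add_finrank

theorem dimVec_quotient_ne_zero_iff {U : ∀ i, Submodule F (V i)} :
    (dimVec F fun i => V i ⧸ U i) ≠ 0 ↔ U < ⊤ := by
  rw [lt_top_iff_ne_top, not_iff_not, funext_iff, funext_iff]
  refine forall_congr' fun i => ?_
  rw [dimVec, Pi.zero_apply, Module.finrank_zero_iff, Submodule.Quotient.subsingleton_iff,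
    Pi.top_apply]

theorem dimVec_lt_dimVec {U : ∀ i, Submodule F (V i)} (hU : U < ⊤) :
    (dimVec F fun i => U i) < dimVec F V := by
  rw [← dimVec_add_dimVec_quotient U]
  exact lt_add_of_pos_right _ (pos_iff_ne_zero.2 (dimVec_quotient_ne_zero_iff.2 hU))

end DimVec

section GradedSubspaceCount

variable {F : Type*} [Field F] [Fintype F] {n : ℕ} {V : Fin n → Type*} [∀ i, AddCommGroup (V i)]
  [∀ i, Module F (V i)] [∀ i, Finite (V i)]

theorem card_dimVec_eq {β γ : Fin n → ℕ} (h : β + γ = dimVec F V) :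
    ((Finset.univ.filter fun U : ∀ i, Submodule F (V i) => dimVec F (fun i => U i) = β).card : ℚ) =
      cardGLq (Fintype.card F) (β + γ) / (cardGLq (Fintype.card F) β *
        ((Fintype.card F : ℚ) ^ (∑ i, β i * γ i) * cardGLq (Fintype.card F) γ)) := by
  have hpi : (Finset.univ.filter fun U : ∀ i, Submodule F (V i) => dimVec F (fun i => U i) = β) =
      Fintype.piFinset fun i => Finset.univ.filter fun W : Submodule F (V i) =>
        Module.finrank F W = β i := by
    ext U
    simp [dimVec, funext_iff]
  rw [hpi, Fintype.card_piFinset, Nat.cast_prod,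
    Finset.prod_congr rfl fun i _ => card_submodule_finrank_eq (congrFun h i),
    Finset.prod_div_distrib, Finset.prod_mul_distrib, Finset.prod_mul_distrib,
    Finset.prod_pow_eq_pow_sum]
  rfl

theorem sum_dimVec (g : (Fin n → ℕ) → (Fin n → ℕ) → ℚ) :
    ∑ U : ∀ i, Submodule F (V i), g (dimVec F fun i => U i) (dimVec F fun i => V i ⧸ U i) =
      ∑ p ∈ antidiagonal (dimVec F V),
        cardGLq (Fintype.card F) (p.1 + p.2) / (cardGLq (Fintype.card F) p.1 *
          ((Fintype.card F : ℚ) ^ (∑ i, p.1 i * p.2 i) * cardGLq (Fintype.card F) p.2)) *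
            g p.1 p.2 := by
  rw [← Finset.sum_fiberwise_of_maps_to (t := antidiagonal (dimVec F V))
    (g := fun U => (dimVec F fun i => U i, dimVec F fun i => V i ⧸ U i))
    fun U _ => mem_antidiagonal.2 (dimVec_add_dimVec_quotient U)]
  refine Finset.sum_congr rfl fun p hp => ?_
  have hfiber (U : ∀ i, Submodule F (V i)) :
      (dimVec F fun i => U i, dimVec F fun i => V i ⧸ U i) = p ↔ (dimVec F fun i => U i) = p.1 := by
    refine ⟨congrArg Prod.fst, fun h => Prod.ext h (add_left_cancel (a := p.1) ?_)⟩
    rw [mem_antidiagonal.1 hp, ← h, dimVec_add_dimVec_quotient]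
  rw [← card_dimVec_eq (mem_antidiagonal.1 hp), ← nsmul_eq_mul, ← Finset.sum_const]
  refine Finset.sum_congr (Finset.filter_congr fun U _ => hfiber U) fun U hU => ?_
  rw [← (hfiber U).2 ((Finset.mem_filter_univ U).1 hU)]

theorem sum_lt_top_dimVec (P : (Fin n → ℕ) → Prop) (g : (Fin n → ℕ) → (Fin n → ℕ) → ℚ) :
    ∑ U : ∀ i, Submodule F (V i) with U < ⊤ ∧ P (dimVec F fun i => U i),
        g (dimVec F fun i => U i) (dimVec F fun i => V i ⧸ U i) =
      ∑ p ∈ antidiagonal (dimVec F V) with p.2 ≠ 0 ∧ P p.1,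
        cardGLq (Fintype.card F) (p.1 + p.2) / (cardGLq (Fintype.card F) p.1 *
          ((Fintype.card F : ℚ) ^ (∑ i, p.1 i * p.2 i) * cardGLq (Fintype.card F) p.2)) *
            g p.1 p.2 := by
  simpa only [Finset.sum_filter, mul_ite, mul_zero, dimVec_quotient_ne_zero_iff] using
    sum_dimVec (F := F) (V := V) fun β γ => if γ ≠ 0 ∧ P β then g β γ else 0

end GradedSubspaceCount

section Representations

/-- The representations over `F`, on the spaces `V i`, of the quiver with `a i j` arrows from `i`
to `j`; a coordinate-free version of `QRep`, so that subrepresentations are again of this form. -/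
abbrev QuiverRep (F : Type*) [Field F] {ι : Type*} (a : ι → ι → ℕ) (V : ι → Type*)
    [∀ i, AddCommGroup (V i)] [∀ i, Module F (V i)] :=
  ∀ i j, Fin (a i j) → (V i →ₗ[F] V j)

variable {F : Type*} [Field F] {ι : Type*} {a : ι → ι → ℕ} {V : ι → Type*}
  [∀ i, AddCommGroup (V i)] [∀ i, Module F (V i)]

/-- The family of subspaces `U` is a subrepresentation of `σ`. -/
def IsSubrep (σ : QuiverRep F a V) (U : ∀ i, Submodule F (V i)) : Prop :=
  ∀ i j t, ∀ x ∈ U i, σ i j t x ∈ U j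

/-- The restriction of `σ` to the subrepresentation `U`. -/
def QuiverRep.restrict (σ : QuiverRep F a V) (U : ∀ i, Submodule F (V i)) (h : IsSubrep σ U) :
    QuiverRep F a fun i => U i :=
  fun i j t => (σ i j t).restrict (h i j t)

/-- The family of subspaces `U` is a subrepresentation of `σ` with dimension vector in `P`. -/
def IsSubrepOfDim (P : (ι → ℕ) → Prop) (σ : QuiverRep F a V) (U : ∀ i, Submodule F (V i)) : Prop :=
  IsSubrep σ U ∧ P (dimVec F fun i => U i)

/-- The families of subspaces of the spaces `U i` as the initial segment of the families of
subspaces of the spaces `V i` that lie below `U`. -/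
def subspaceInitialSeg (U : ∀ i, Submodule F (V i)) :
    (∀ i, Submodule F (U i)) ≤i (∀ i, Submodule F (V i)) where
  toRelEmbedding := OrderEmbedding.ltEmbedding <|
    OrderEmbedding.ofMapLEIff (fun W i => (W i).map (U i).subtype) fun _ _ =>
      forall_congr' fun i => Submodule.map_le_map_iff_of_injective (U i).injective_subtype _ _
  mem_range_of_rel' W W' h := by
    refine ⟨fun i => (W' i).comap (U i).subtype, funext fun i => ?_⟩
    refine (Submodule.map_comap_subtype _ _).trans (inf_eq_right.2 ((h.le i).trans ?_))
    exact Submodule.map_subtype_le _ _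

theorem isSubrep_subspaceInitialSeg {σ : QuiverRep F a V} {U : ∀ i, Submodule F (V i)}
    (h : IsSubrep σ U) {W : ∀ i, Submodule F (U i)} :
    IsSubrep σ (subspaceInitialSeg U W) ↔ IsSubrep (σ.restrict U h) W := by
  refine forall₃_congr fun i j t => ⟨fun hσ x hx => ?_, ?_⟩
  · obtain ⟨y, hy, hyx⟩ := hσ x (Submodule.mem_map_of_mem hx)
    rwa [← show y = σ.restrict U h i j t x from Subtype.ext hyx]
  · rintro hτ _ ⟨x, hx, rfl⟩
    exact ⟨_, hτ x hx, rfl⟩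

theorem alternatingChainSum_restrict [Finite ι] [∀ i, Finite (V i)]
    (P : (ι → ℕ) → Prop) {σ : QuiverRep F a V} {U : ∀ i, Submodule F (V i)} (h : IsSubrep σ U) :
    alternatingChainSum (IsSubrepOfDim P σ) U =
      alternatingChainSum (IsSubrepOfDim P (σ.restrict U h)) ⊤ := by
  have htop : subspaceInitialSeg U ⊤ = U := funext fun i => (U i).map_subtype_top
  have hcomp : IsSubrepOfDim P σ ∘ subspaceInitialSeg U = IsSubrepOfDim P (σ.restrict U h) := by
    funext W
    have hdim : (dimVec F fun i => subspaceInitialSeg U W i) = dimVec F fun i => W i :=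
      funext fun i => (U i).finrank_map_subtype_eq (W i)
    rw [Function.comp_apply, IsSubrepOfDim, IsSubrepOfDim, isSubrep_subspaceInitialSeg h, hdim]
  rw [← hcomp, ← alternatingChainSum_initialSeg, htop]

end Representations

section Count

/-- The number `∑ a_{ij} β_i γ_j` of matrix entries in a family of maps from a graded space of
dimension `β` to one of dimension `γ`, one map for each arrow. -/
def arrowForm {ι : Type*} [Fintype ι] (a : ι → ι → ℕ) (β γ : ι → ℕ) : ℕ :=
  ∑ i, ∑ j, a i j * β i * γ j

/-- A linear map sending `U` to `U'` is given by a map `U → U'` and an arbitrary map on a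
complement of `U`. -/
noncomputable def mapsToEquiv {F A B : Type*} [Field F] [AddCommGroup A] [Module F A]
    [AddCommGroup B] [Module F B] {U C : Submodule F A} (h : IsCompl U C) (U' : Submodule F B) :
    {f : A →ₗ[F] B // ∀ x ∈ U, f x ∈ U'} ≃ (U →ₗ[F] U') × (C →ₗ[F] B) where
  toFun f := (f.1.restrict f.2, f.1.domRestrict C)
  invFun p := ⟨LinearMap.ofIsCompl h (U'.subtype ∘ₗ p.1) p.2, fun x hx => by
    rw [LinearMap.ofIsCompl_apply_left h ⟨x, hx⟩]
    exact (p.1 ⟨x, hx⟩).2⟩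
  left_inv f := Subtype.ext <| LinearMap.ofIsCompl_eq h (fun _ => rfl) fun _ => rfl
  right_inv p := by ext x <;> simp [LinearMap.restrict_apply]

variable {F : Type*} [Field F] {ι : Type*} {a : ι → ι → ℕ} {V : ι → Type*}
  [∀ i, AddCommGroup (V i)] [∀ i, Module F (V i)]

/-- The version of `mapsToEquiv` for families of linear maps indexed by the arrows. -/
noncomputable def isSubrepEquiv {U C : ∀ i, Submodule F (V i)} (h : ∀ i, IsCompl (U i) (C i)) :
    {σ : QuiverRep F a V // IsSubrep σ U} ≃
      QuiverRep F a (fun i => U i) × (∀ i j, Fin (a i j) → (C i →ₗ[F] V j)) where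
  toFun σ := (σ.1.restrict U σ.2, fun i j t => (σ.1 i j t).domRestrict (C i))
  invFun p := ⟨fun i j t => ((mapsToEquiv (h i) (U j)).symm (p.1 i j t, p.2 i j t)).1,
    fun i j t => ((mapsToEquiv (h i) (U j)).symm (p.1 i j t, p.2 i j t)).2⟩
  left_inv σ := Subtype.ext <| funext fun i => funext fun j => funext fun t =>
    congrArg Subtype.val ((mapsToEquiv (h i) (U j)).left_inv ⟨σ.1 i j t, σ.2 i j t⟩)
  right_inv p := Prod.ext
    (funext fun i => funext fun j => funext fun t =>
      congrArg Prod.fst ((mapsToEquiv (h i) (U j)).right_inv (p.1 i j t, p.2 i j t)))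
    (funext fun i => funext fun j => funext fun t =>
      congrArg Prod.snd ((mapsToEquiv (h i) (U j)).right_inv (p.1 i j t, p.2 i j t)))

variable [Fintype F] [Fintype ι] [DecidableEq ι] [∀ i, Finite (V i)]

instance finite_linearMap {R M N : Type*} [Semiring R] [AddCommMonoid M] [Module R M]
    [AddCommMonoid N] [Module R N] [Finite M] [Finite N] : Finite (M →ₗ[R] N) :=
  DFunLike.finite _

theorem card_arrowMaps (C : ι → Type*) [∀ i, AddCommGroup (C i)] [∀ i, Module F (C i)]
    [∀ i, Finite (C i)] :
    Fintype.card (∀ i j, Fin (a i j) → (C i →ₗ[F] V j)) =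
      Fintype.card F ^ arrowForm a (dimVec F C) (dimVec F V) := by
  have hcard (i j : ι) : Fintype.card (Fin (a i j) → (C i →ₗ[F] V j)) =
      Fintype.card F ^ (a i j * dimVec F C i * dimVec F V j) := by
    rw [Fintype.card_fun, Module.card_eq_pow_finrank (K := F), Module.finrank_linearMap,
      Fintype.card_fin, ← pow_mul, mul_comm, ← mul_assoc, dimVec, dimVec]
  simp only [Fintype.card_pi, hcard, Finset.prod_pow_eq_pow_sum, arrowForm]

theorem sum_restrict {R : Type*} [AddCommMonoid R] (U : ∀ i, Submodule F (V i))
    (g : QuiverRep F a (fun i => U i) → R) :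
    ∑ σ : {σ : QuiverRep F a V // IsSubrep σ U}, g (σ.1.restrict U σ.2) =
      Fintype.card F ^ arrowForm a (dimVec F fun i => V i ⧸ U i) (dimVec F V) • ∑ τ, g τ := by
  choose C hC using fun i => Submodule.exists_isCompl (U i)
  have hdim : (dimVec F fun i => V i ⧸ U i) = dimVec F fun i => C i :=
    funext fun i => ((U i).quotientEquivOfIsCompl (C i) (hC i)).finrank_eq
  rw [Fintype.sum_equiv (isSubrepEquiv hC) (fun σ => g (σ.1.restrict U σ.2))
    (fun p => g p.1) fun _ => rfl,
    Fintype.sum_prod_type_right]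
  simp only [Finset.sum_const, Finset.card_univ, card_arrowMaps, hdim]

theorem sum_alternatingChainSum_eq_sub (P : (ι → ℕ) → Prop) :
    ∑ σ : QuiverRep F a V, alternatingChainSum (IsSubrepOfDim P σ) ⊤ =
      (Fintype.card F : ℤ) ^ arrowForm a (dimVec F V) (dimVec F V) -
      ∑ U : ∀ i, Submodule F (V i) with U < ⊤ ∧ P (dimVec F fun i => U i),
        (Fintype.card F : ℤ) ^ arrowForm a (dimVec F fun i => V i ⧸ U i) (dimVec F V) *
          ∑ τ : QuiverRep F a fun i => U i, alternatingChainSum (IsSubrepOfDim P τ) ⊤ := by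
  have hchain (σ : QuiverRep F a V) : alternatingChainSum (IsSubrepOfDim P σ) ⊤ = 1 -
      ∑ U : ∀ i, Submodule F (V i) with U < ⊤ ∧ P (dimVec F fun i => U i),
        if IsSubrep σ U then alternatingChainSum (IsSubrepOfDim P σ) U else 0 := by
    rw [alternatingChainSum_eq, ← Finset.sum_filter, Finset.filter_filter]
    simp only [IsSubrepOfDim, and_assoc, and_comm]
  have hsubrep (U : ∀ i, Submodule F (V i)) :
      ∑ σ : QuiverRep F a V,
        (if IsSubrep σ U then alternatingChainSum (IsSubrepOfDim P σ) U else 0) =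
      (Fintype.card F : ℤ) ^ arrowForm a (dimVec F fun i => V i ⧸ U i) (dimVec F V) *
          ∑ τ : QuiverRep F a fun i => U i, alternatingChainSum (IsSubrepOfDim P τ) ⊤ := by
    rw [← Finset.sum_filter, Finset.sum_subtype _ fun _ => Finset.mem_filter_univ _,
      Finset.sum_congr rfl fun σ _ => alternatingChainSum_restrict P σ.2,
      sum_restrict U fun τ => alternatingChainSum (IsSubrepOfDim P τ) ⊤, nsmul_eq_mul,
      Nat.cast_pow]
  rw [Finset.sum_congr rfl fun σ _ => hchain σ, Finset.sum_sub_distrib, Finset.sum_comm,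
    Finset.sum_congr rfl fun U _ => hsubrep U, Finset.sum_const, Finset.card_univ,
    card_arrowMaps V, nsmul_one, Nat.cast_pow]

end Count

section TupleTerm

theorem sum_lt_get_append_singleton {M A : Type*} [AddCommMonoid A] (f : M → M → A) (L : List M)
    (z : M) :
    ∑ p : Fin (L ++ [z]).length × Fin (L ++ [z]).length with p.1 < p.2,
        f ((L ++ [z]).get p.2) ((L ++ [z]).get p.1) =
      ∑ p : Fin L.length × Fin L.length with p.1 < p.2, f (L.get p.2) (L.get p.1) +
        (L.map (f z)).sum := by
  have hlen : L.length + 1 = (L ++ [z]).length := by simp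
  simp only [Finset.sum_filter, Fintype.sum_prod_type_right, List.get_eq_getElem,
    ← (finCongr hlen).sum_comp, Fin.sum_univ_castSucc, ← Fin.sum_univ_fun_getElem]
  simp [(Fin.le_last _).not_gt]

variable {n : ℕ} {a : Fin n → Fin n → ℕ}

theorem eulerForm_add_right (β γ δ : Fin n → ℕ) :
    eulerForm n a β (γ + δ) = eulerForm n a β γ + eulerForm n a β δ := by
  simp only [eulerForm, Pi.add_apply, Nat.cast_add, mul_add, Finset.sum_add_distrib]
  ring

theorem eulerForm_list_sum (β : Fin n → ℕ) (L : List (Fin n → ℕ)) :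
    eulerForm n a β L.sum = (L.map (eulerForm n a β)).sum :=
  map_list_sum (AddMonoidHom.mk' (eulerForm n a β) (eulerForm_add_right β)) L

/-- The summand of Reineke's recursion attached to the tuple `L`. -/
noncomputable def tupleTerm (q : ℚ) (a : Fin n → Fin n → ℕ) (L : List (Fin n → ℕ)) : ℚ :=
  (-1 : ℚ) ^ (L.length - 1) *
    q ^ (-(∑ p ∈ Finset.univ.filter (fun p : Fin L.length × Fin L.length => p.1 < p.2),
            eulerForm n a (L.get p.2) (L.get p.1))) *
    ∏ s : Fin L.length, Rall q n a (L.get s) / cardGLq q (L.get s)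

theorem tupleTerm_singleton (q : ℚ) (β : Fin n → ℕ) :
    tupleTerm q a [β] = Rall q n a β / cardGLq q β := by
  rw [tupleTerm, ← List.nil_append [β], sum_lt_get_append_singleton]
  simp

theorem tupleTerm_append_singleton {q : ℚ} (hq : q ≠ 0) {L : List (Fin n → ℕ)} (hL : L ≠ [])
    (γ : Fin n → ℕ) :
    tupleTerm q a (L ++ [γ]) =
      -(q ^ (-eulerForm n a γ L.sum) * (Rall q n a γ / cardGLq q γ)) * tupleTerm q a L := by
  have hprod (L : List (Fin n → ℕ)) :
      ∏ s : Fin L.length, Rall q n a (L.get s) / cardGLq q (L.get s) =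
        (L.map fun β => Rall q n a β / cardGLq q β).prod :=
    Fin.prod_univ_fun_getElem L fun β => Rall q n a β / cardGLq q β
  have hsign : (-1 : ℚ) ^ ((L ++ [γ]).length - 1) = -(-1) ^ (L.length - 1) := by
    rw [List.length_append, List.length_singleton, Nat.add_sub_cancel,
      ← mul_pow_sub_one (mt List.length_eq_zero_iff.1 hL), neg_one_mul]
  rw [tupleTerm, tupleTerm, hsign, sum_lt_get_append_singleton, ← eulerForm_list_sum, neg_add,
    zpow_add₀ hq, hprod, hprod, List.map_append, List.prod_append, List.map_singleton,
    List.prod_singleton]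
  ring

theorem Rall_eq_pow_arrowForm (q : ℚ) (β : Fin n → ℕ) : Rall q n a β = q ^ arrowForm a β β :=
  rfl

theorem pow_arrowForm_add {q : ℚ} (hq : q ≠ 0) (β γ : Fin n → ℕ) :
    q ^ arrowForm a γ (β + γ) =
      q ^ (∑ i, β i * γ i) * q ^ (-eulerForm n a γ β) * Rall q n a γ := by
  have hexp : (arrowForm a γ (β + γ) : ℤ) =
      (∑ i, β i * γ i : ℕ) + -eulerForm n a γ β + (arrowForm a γ γ : ℕ) := by
    simp only [arrowForm, eulerForm, Pi.add_apply, mul_add, Finset.sum_add_distrib, mul_comm (β _)]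
    push_cast
    ring
  rw [Rall_eq_pow_arrowForm, ← zpow_natCast, hexp, zpow_add₀ hq, zpow_add₀ hq, zpow_natCast,
    zpow_natCast]

end TupleTerm

section MainIdentity

variable {n : ℕ} {a : Fin n → Fin n → ℕ} {F : Type*} [Field F] [Fintype F]

theorem finsum_tupleTerm {q : ℚ} (hq : q ≠ 0) (P : (Fin n → ℕ) → Prop) {β : Fin n → ℕ}
    (hβ : β ≠ 0) :
    ∑ᶠ L ∈ restrictedCompositions P β, tupleTerm q a L = Rall q n a β / cardGLq q β -
      ∑ p ∈ antidiagonal β with p.2 ≠ 0 ∧ P p.1,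
        q ^ (-eulerForm n a p.2 p.1) * (Rall q n a p.2 / cardGLq q p.2) *
          ∑ᶠ L ∈ restrictedCompositions P p.1, tupleTerm q a L := by
  rw [finsum_restrictedCompositions P hβ, tupleTerm_singleton, sub_eq_add_neg,
    ← Finset.sum_neg_distrib]
  congr! 2 with p
  rw [← neg_mul, mul_finsum_mem]
  exact finsum_mem_congr rfl fun L hL => by rw [tupleTerm_append_singleton hq hL.1, hL.2.2.1]

theorem sum_alternatingChainSum_eq_cardGLq_mul {P : (Fin n → ℕ) → Prop} (hP : ¬ P 0)
    (V : Fin n → Type*) [∀ i, AddCommGroup (V i)] [∀ i, Module F (V i)] [∀ i, Finite (V i)]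
    (hV : dimVec F V ≠ 0) :
    ((∑ σ : QuiverRep F a V, alternatingChainSum (IsSubrepOfDim P σ) ⊤ : ℤ) : ℚ) =
      cardGLq (Fintype.card F) (dimVec F V) *
        ∑ᶠ L ∈ restrictedCompositions P (dimVec F V), tupleTerm (Fintype.card F) a L := by
  generalize hβ : dimVec F V = β
  induction β using WellFoundedLT.induction generalizing V with
  | ind β ih =>
  subst hβ
  have hq1 : (1 : ℚ) < Fintype.card F := mod_cast Fintype.one_lt_card (α := F)
  have hq : (Fintype.card F : ℚ) ≠ 0 := by positivity
  have hsubspace (U : ∀ i, Submodule F (V i)) (hU : U < ⊤ ∧ P (dimVec F fun i => U i)) :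
      ((∑ τ : QuiverRep F a fun i => U i, alternatingChainSum (IsSubrepOfDim P τ) ⊤ : ℤ) : ℚ) =
        cardGLq (Fintype.card F) (dimVec F fun i => U i) *
          ∑ᶠ L ∈ restrictedCompositions P (dimVec F fun i => U i), tupleTerm (Fintype.card F) a L :=
    ih _ (dimVec_lt_dimVec hU.1) (fun i => U i) (fun h => hP (h ▸ hU.2)) rfl
  rw [sum_alternatingChainSum_eq_sub, Int.cast_sub, Int.cast_sum]
  simp_rw [Int.cast_mul]
  rw [Finset.sum_congr rfl fun U hU => by rw [hsubspace U ((Finset.mem_filter_univ U).1 hU)]]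
  push_cast
  rw [sum_lt_top_dimVec (F := F) (V := V) P fun β γ =>
      (Fintype.card F : ℚ) ^ arrowForm a γ (dimVec F V) * (cardGLq (Fintype.card F) β *
        ∑ᶠ L ∈ restrictedCompositions P β, tupleTerm (Fintype.card F) a L),
    finsum_tupleTerm hq P hV, mul_sub, mul_div_cancel₀ _ (cardGLq_ne_zero hq1 _),
    Finset.mul_sum, Rall_eq_pow_arrowForm]
  congr 1
  refine Finset.sum_congr rfl fun p hp => ?_
  rw [← mem_antidiagonal.1 (Finset.mem_filter.1 hp).1, pow_arrowForm_add hq]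
  have := cardGLq_ne_zero hq1 p.1
  have := cardGLq_ne_zero hq1 p.2
  field_simp

end MainIdentity

section Semistable

variable {F : Type*} [Field F] {ι : Type*} {a : ι → ι → ℕ} {V : ι → Type*}
  [∀ i, AddCommGroup (V i)] [∀ i, Module F (V i)]

theorem IsSubrep.inf {σ : QuiverRep F a V} {U W : ∀ i, Submodule F (V i)} (hU : IsSubrep σ U)
    (hW : IsSubrep σ W) : IsSubrep σ (U ⊓ W) :=
  fun i j t x hx => ⟨hU i j t x hx.1, hW i j t x hx.2⟩

theorem IsSubrep.sup {σ : QuiverRep F a V} {U W : ∀ i, Submodule F (V i)} (hU : IsSubrep σ U)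
    (hW : IsSubrep σ W) : IsSubrep σ (U ⊔ W) := fun i j t =>
  sup_le (a := U i) (b := W i) (c := ((U ⊔ W) j).comap (σ i j t))
    (fun x hx => Submodule.mem_sup_left (hU i j t x hx))
    fun x hx => Submodule.mem_sup_right (hW i j t x hx)

variable [∀ i, Finite (V i)] [Finite ι]
  {A : Type*} [AddCommMonoid A] [LinearOrder A] [IsOrderedCancelAddMonoid A]

/- A subrepresentation `M` on which `f` is maximal meets every `U` with `0 < f (dim U)` in a
subrepresentation of the same kind, since `f (dim (U + M)) ≤ f (dim M)`. -/
theorem alternatingChainSum_pos_subrep (f : (ι → ℕ) →+ A) (hf : f (dimVec F V) = 0)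
    (σ : QuiverRep F a V) :
    alternatingChainSum (IsSubrepOfDim (0 < f ·) σ) ⊤ =
      if ∃ U, IsSubrepOfDim (0 < f ·) σ U then 0 else 1 := by
  split_ifs with h
  · obtain ⟨U₀, hU₀, hpos⟩ := h
    obtain ⟨M, hM, hmax⟩ := Set.exists_max_image {U | IsSubrep σ U}
      (fun U => f (dimVec F fun i => U i)) (Set.toFinite _) ⟨U₀, hU₀⟩
    have hMpos : 0 < f (dimVec F fun i => M i) := hpos.trans_le (hmax U₀ hU₀)
    have hinf (U : ∀ i, Submodule F (V i)) (hU : IsSubrepOfDim (0 < f ·) σ U) :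
        IsSubrepOfDim (0 < f ·) σ (U ⊓ M) := by
      refine ⟨hU.1.inf hM, pos_of_lt_add_right (a := f (dimVec F fun i => M i)) ?_⟩
      calc f (dimVec F fun i => M i) < f (dimVec F fun i => U i) + f (dimVec F fun i => M i) :=
            lt_add_of_pos_left _ hU.2
        _ = f (dimVec F fun i => (U ⊔ M) i) + f (dimVec F fun i => (U ⊓ M) i) := by
            rw [← map_add, ← map_add, dimVec_sup_add_dimVec_inf]
        _ ≤ f (dimVec F fun i => M i) + f (dimVec F fun i => (U ⊓ M) i) := by
            gcongr
            exact hmax _ (hU.1.sup hM)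
    refine alternatingChainSum_eq_zero hinf ?_ fun hle => ?_
    · rw [top_inf_eq]
      exact ⟨hM, hMpos⟩
    · rw [top_le_iff.1 hle, dimVec_top, hf] at hMpos
      exact hMpos.false
  · exact alternatingChainSum_eq_one fun U _ hU => h ⟨U, hU⟩

end Semistable

section Slope

variable {n : ℕ} (θ : (Fin n → ℤ) →ₗ[ℤ] ℤ) (μ : ℚ)

/-- The additive function `θ(β) - μ · ht(β)`, whose sign compares the slope of `β` with `μ`. -/
def slopeDefect : (Fin n → ℕ) →+ ℚ :=
  AddMonoidHom.mk' (fun β => θ (fun i => (β i : ℤ)) - μ * (∑ i, β i : ℕ)) fun β γ => by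
    have hcast : (fun i => ((β + γ) i : ℤ)) = (fun i => (β i : ℤ)) + fun i => (γ i : ℤ) :=
      funext fun i => Nat.cast_add _ _
    rw [hcast, map_add]
    simp only [Pi.add_apply, Finset.sum_add_distrib]
    push_cast
    ring

variable {θ μ} {β : Fin n → ℕ}

theorem slopeDefect_eq_zero_iff : slopeDefect θ μ β = 0 ↔ qSlopeIs n θ μ β :=
  sub_eq_zero

theorem ht_pos (hβ : β ≠ 0) : (0 : ℚ) < (∑ i, β i : ℕ) := by
  obtain ⟨i, hi⟩ := Function.ne_iff.1 hβ
  exact mod_cast Finset.sum_pos' (fun _ _ => Nat.zero_le _)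
    ⟨i, Finset.mem_univ i, Nat.pos_of_ne_zero hi⟩

theorem slopeDefect_pos_iff (hβ : β ≠ 0) : 0 < slopeDefect θ μ β ↔ μ < qSlope n θ β :=
  sub_pos.trans (lt_div_iff₀ (ht_pos hβ)).symm

theorem qSlope_eq (hβ : β ≠ 0) (h : qSlopeIs n θ μ β) : qSlope n θ β = μ :=
  (div_eq_iff (ht_pos hβ).ne').2 h

/-- Matrix representations as representations by linear maps between coordinate spaces. -/
def qRepEquiv (F : Type*) [Field F] (a : Fin n → Fin n → ℕ) (α : Fin n → ℕ) :
    QRep n a F α ≃ QuiverRep F a fun i => Fin (α i) → F :=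
  Equiv.piCongrRight fun _ => Equiv.piCongrRight fun _ => Equiv.piCongrRight fun _ =>
    Matrix.toLin'.toEquiv

variable {F : Type*} [Field F] {a : Fin n → Fin n → ℕ} {α : Fin n → ℕ}

theorem dimVec_coordinateSpace : (dimVec F fun i => Fin (α i) → F) = α :=
  funext fun _ => Module.finrank_fin_fun F

theorem isSemistable_iff (hα : α ≠ 0) (hslope : qSlopeIs n θ μ α) (σ : QRep n a F α) :
    IsSemistable θ σ ↔ ¬ ∃ U, IsSubrepOfDim (0 < slopeDefect θ μ ·) (qRepEquiv F a α σ) U := by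
  rw [IsSemistable, qSlope_eq hα hslope, not_exists]
  constructor
  · rintro hσ U ⟨hU, hpos⟩
    have hdim : (dimVec F fun i => U i) ≠ 0 := fun h => by simp [h] at hpos
    have htop : U ≠ ⊤ := by
      rintro rfl
      rw [dimVec_top, dimVec_coordinateSpace, slopeDefect_eq_zero_iff.2 hslope] at hpos
      exact hpos.false
    exact (hσ ⟨U, hU⟩ (dimVec_ne_zero_iff.1 hdim) (Function.ne_iff.1 htop)).not_gt
      ((slopeDefect_pos_iff hdim).1 hpos)
  · intro hσ W hbot _
    by_contra! hlt
    exact hσ W.U ⟨W.stable, (slopeDefect_pos_iff (dimVec_ne_zero_iff.2 hbot)).2 hlt⟩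

theorem Rss_eq_sum {F : Type} [Field F] [Fintype F] (hα : α ≠ 0) (hslope : qSlopeIs n θ μ α) :
    (Rss F n a θ μ α : ℤ) = ∑ σ : QuiverRep F a fun i => Fin (α i) → F,
      alternatingChainSum (IsSubrepOfDim (0 < slopeDefect θ μ ·) σ) ⊤ := by
  have hdefect : slopeDefect θ μ (dimVec F fun i => Fin (α i) → F) = 0 := by
    rw [dimVec_coordinateSpace, slopeDefect_eq_zero_iff.2 hslope]
  simp only [Rss, isSemistable_iff hα hslope, hslope, and_true,
    alternatingChainSum_pos_subrep (slopeDefect θ μ) hdefect, Nat.card_eq_fintype_card,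
    Fintype.card_subtype, Finset.card_filter, ← (qRepEquiv F a α).sum_comp]
  push_cast
  simp only [ite_not]
  congr!

end Slope

/-- Reineke's Harder–Narasimhan recursion: for `α ≠ 0` with `θ(α) = μ·ht(α)`,
`R^{ss}_μ(α,q)/|GL(α,F_q)|` equals the sum over all tuples `(α^1,…,α^s)` of non-zero
dimension vectors with `Σ α^i = α` and `μ(α^1 + ⋯ + α^i) > μ(α)` for `1 ≤ i ≤ s−1` of
`(−1)^{s−1} q^{−Σ_{i<j}⟨α^j,α^i⟩} ∏_i R(α^i,q)/|GL(α^i,F_q)|`. -/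
theorem reineke_recursion (F : Type) [Field F] [Fintype F]
    (n : ℕ) (a : Fin n → Fin n → ℕ) (θ : (Fin n → ℤ) →ₗ[ℤ] ℤ) (μ : ℚ)
    (α : Fin n → ℕ) (hα : α ≠ 0) (hslope : qSlopeIs n θ μ α) :
    (Rss F n a θ μ α : ℚ) / cardGLq (Fintype.card F) α =
      ∑ᶠ L : List (Fin n → ℕ),
        if L ≠ [] ∧ (∀ β ∈ L, β ≠ 0) ∧ L.sum = α ∧
            (∀ i : ℕ, 1 ≤ i → i + 1 ≤ L.length →
              qSlope n θ (L.take i).sum > qSlope n θ α) then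
          (-1 : ℚ) ^ (L.length - 1) *
            (Fintype.card F : ℚ) ^
              (-(∑ p ∈ Finset.univ.filter
                  (fun p : Fin L.length × Fin L.length => p.1 < p.2),
                    eulerForm n a (L.get p.2) (L.get p.1))) *
            ∏ s : Fin L.length,
              Rall (Fintype.card F) n a (L.get s) / cardGLq (Fintype.card F) (L.get s)
        else 0 := by
  have hq : (1 : ℚ) < Fintype.card F := mod_cast Fintype.one_lt_card (α := F)
  have hcount := sum_alternatingChainSum_eq_cardGLq_mul (F := F) (a := a)
    (P := (0 < slopeDefect θ μ ·)) (by simp) (fun i => Fin (α i) → F)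
    (dimVec_coordinateSpace.trans_ne hα)
  rw [← Rss_eq_sum hα hslope, dimVec_coordinateSpace, Int.cast_natCast] at hcount
  rw [hcount, mul_div_cancel_left₀ _ (cardGLq_ne_zero hq α), qSlope_eq hα hslope,
    restrictedCompositions_congr fun β hβ => slopeDefect_pos_iff hβ]
  exact finsum_congr fun L => finsum_eq_if.trans (if_congr Iff.rfl rfl rfl)
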